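/- Let X be a compact Hausdorff space, let μ be a regular Borel probability measure on X, and let 𝒞 be a family of clopen subsets of X with finite VC dimension, i.e. there is a natural number d such that no d-element subset of X is shattered by 𝒞. Then for every ε > 0 there exist k ≥ 1 and a closed subset B of X^k with (μ^k)(B) > 0 (where μ^k is the product measure on X^k) such that for every (p₁,…,p_k) ∈ B and every A ∈ 𝒞, |fr_k(A, (p₁,…,p_k)) − μ(A)| ≤ ε; that is, every tuple in B simultaneously ε-approximates the μ-measure of every set in the family 𝒞 by frequencies. -/

import Mathlib

open MeasureTheory

/-- A family `C` of subsets of `X` shatters a finite set `F` if every subset of `F`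
is of the form `F ∩ A` for some `A ∈ C`. -/
def Shatters {X : Type*} (C : Set (Set X)) (F : Finset X) : Prop :=
  ∀ S : Finset X, S ⊆ F → ∃ A ∈ C, (F : Set X) ∩ A = (S : Set X)

open Classical in
/-- `freq k A p` is the proportion of coordinates of the `k`-tuple `p` lying in `A`. -/
noncomputable def freq {X : Type*} (k : ℕ) (A : Set X) (p : Fin k → X) : ℝ :=
  ((Finset.univ.filter fun i => p i ∈ A).card : ℝ) / k


def sgn7 (b : Bool) : ℝ := if b then -1 else 1

lemma exp_sum7 (k : ℕ) (a : Fin k → ℝ) (ha : ∀ i, |a i| ≤ 1) (l : ℝ) :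
    ∑ s : Fin k → Bool, Real.exp (l * ∑ i, sgn7 (s i) * a i) ≤ 2 ^ k * Real.exp (l ^ 2 * k / 2) := by
  have h1 : ∀ s : Fin k → Bool, Real.exp (l * ∑ i, sgn7 (s i) * a i)
      = ∏ i, Real.exp (l * (sgn7 (s i) * a i)) := by
    intro s
    rw [Finset.mul_sum, Real.exp_sum]
  simp_rw [h1]
  have h2 := Finset.prod_univ_sum (fun _ : Fin k => (Finset.univ : Finset Bool))
    (fun i b => Real.exp (l * (sgn7 b * a i)))
  rw [Fintype.piFinset_univ] at h2
  rw [← h2]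
  have h3 : ∀ i : Fin k, ∑ b : Bool, Real.exp (l * (sgn7 b * a i)) ≤ 2 * Real.exp (l ^ 2 / 2) := by
    intro i
    have e : ∑ b : Bool, Real.exp (l * (sgn7 b * a i)) = 2 * Real.cosh (l * a i) := by
      rw [Real.cosh_eq]
      simp [sgn7]
      ring
    rw [e]
    have h4 := Real.cosh_le_exp_half_sq (l * a i)
    have h5 : (l * a i) ^ 2 / 2 ≤ l ^ 2 / 2 := by
      have : a i ^ 2 ≤ 1 := by
        rw [← sq_abs]; have := ha i; have := abs_nonneg (a i); nlinarith
      rw [mul_pow]; nlinarith [sq_nonneg l]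
    have := h4.trans (Real.exp_le_exp.2 h5)
    linarith
  calc _ ≤ ∏ i : Fin k, (2 * Real.exp (l ^ 2 / 2)) :=
        Finset.prod_le_prod (fun i _ => Finset.sum_nonneg fun _ _ => (Real.exp_pos _).le)
          (fun i _ => h3 i)
    _ = _ := by
      rw [Finset.prod_const, Finset.card_univ, Fintype.card_fin, mul_pow, ← Real.exp_nat_mul]
      congr 2; ring

lemma exp_abs_sum7 (k : ℕ) (a : Fin k → ℝ) (ha : ∀ i, |a i| ≤ 1) (l : ℝ) :
    ∑ s : Fin k → Bool, Real.exp (l * |∑ i, sgn7 (s i) * a i|)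
      ≤ 2 * 2 ^ k * Real.exp (l ^ 2 * k / 2) := by
  have h1 := exp_sum7 k a ha l
  have h2 := exp_sum7 k a ha (-l)
  rw [neg_sq] at h2
  have : ∑ s : Fin k → Bool, Real.exp (l * |∑ i, sgn7 (s i) * a i|) ≤
      ∑ s : Fin k → Bool, (Real.exp (l * ∑ i, sgn7 (s i) * a i)
        + Real.exp (-l * ∑ i, sgn7 (s i) * a i)) := by
    refine Finset.sum_le_sum fun s _ => ?_
    rcases abs_choice (∑ i, sgn7 (s i) * a i) with h | h <;> rw [h]
    · linarith [Real.exp_pos (-l * ∑ i, sgn7 (s i) * a i)]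
    · rw [mul_neg, ← neg_mul]; linarith [Real.exp_pos (l * ∑ i, sgn7 (s i) * a i)]
  rw [Finset.sum_add_distrib] at this
  linarith

/-- pointwise majorant -/
noncomputable def maj7 (k : ℕ) (T : Finset (Fin k → ℝ)) (l : ℝ) (s : Fin k → Bool) : ℝ :=
  (l * k + Real.exp (-(l ^ 2 * k)) / l * ∑ a ∈ T, Real.exp (l * |∑ i, sgn7 (s i) * a i|)) / k

lemma maj7_le (k : ℕ) (hk : 1 ≤ k) (T : Finset (Fin k → ℝ)) (l : ℝ) (hl : 0 < l)
    (s : Fin k → Bool) (a : Fin k → ℝ) (ha : a ∈ T) :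
    |∑ i, sgn7 (s i) * a i| / k ≤ maj7 k T l s := by
  unfold maj7
  have hk' : (0 : ℝ) < k := by exact_mod_cast hk
  gcongr
  set z := |∑ i, sgn7 (s i) * a i| with hz
  have h1 : Real.exp (l * z) ≤ ∑ a ∈ T, Real.exp (l * |∑ i, sgn7 (s i) * a i|) :=
    Finset.single_le_sum (f := fun a : Fin k → ℝ => Real.exp (l * |∑ i, sgn7 (s i) * a i|))
      (fun _ _ => (Real.exp_pos _).le) ha
  have h2 : l * z ≤ l ^ 2 * k + Real.exp (-(l ^ 2 * k)) * Real.exp (l * z) := by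
    rw [← Real.exp_add]
    have := Real.add_one_le_exp (-(l ^ 2 * k) + l * z)
    linarith
  have h3 : z ≤ l * k + Real.exp (-(l ^ 2 * k)) / l * Real.exp (l * z) := by
    rw [← mul_le_mul_iff_right₀ hl]
    refine h2.trans_eq ?_
    field_simp
  refine h3.trans ?_
  gcongr

lemma maj7_nonneg (k : ℕ) (T : Finset (Fin k → ℝ)) (l : ℝ) (hl : 0 < l)
    (s : Fin k → Bool) : 0 ≤ maj7 k T l s := by
  unfold maj7
  have := fun a : Fin k → ℝ => (Real.exp_pos (l * |∑ i, sgn7 (s i) * a i|)).le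
  have := Finset.sum_nonneg (s := T) (fun a _ => this a)
  positivity

lemma maj7_sum (k : ℕ) (hk : 1 ≤ k) (T : Finset (Fin k → ℝ)) (hT : ∀ a ∈ T, ∀ i, |a i| ≤ 1)
    (l : ℝ) (hl : 0 < l) (N : ℝ) (hN : (T.card : ℝ) ≤ N)
    (hb : 2 * N * Real.exp (-(l ^ 2 * k / 2)) ≤ l ^ 2 * k) :
    ∑ s, maj7 k T l s ≤ 2 ^ k * (2 * l) := by
  have hk' : (0 : ℝ) < k := by exact_mod_cast hk
  unfold maj7
  rw [← Finset.sum_div, div_le_iff₀ hk', Finset.sum_add_distrib,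
    ← Finset.mul_sum (Finset.univ : Finset (Fin k → Bool))
      (fun s => ∑ a ∈ T, Real.exp (l * |∑ i, sgn7 (s i) * a i|)), Finset.sum_comm]
  have h1 : ∑ a ∈ T, ∑ s : Fin k → Bool, Real.exp (l * |∑ i, sgn7 (s i) * a i|)
      ≤ N * (2 * 2 ^ k * Real.exp (l ^ 2 * k / 2)) := by
    refine (Finset.sum_le_card_nsmul T _ _ fun a ha => exp_abs_sum7 k a (hT a ha) l).trans ?_
    rw [nsmul_eq_mul]
    gcongr
  have h2 : Real.exp (-(l ^ 2 * k)) / l * ∑ a ∈ T, ∑ s : Fin k → Bool, Real.exp (l * |∑ i, sgn7 (s i) * a i|)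
      ≤ 2 ^ k * (l * k) := by
    refine (mul_le_mul_of_nonneg_left h1 (by positivity)).trans ?_
    have e : Real.exp (-(l ^ 2 * k)) * Real.exp (l ^ 2 * k / 2) = Real.exp (-(l ^ 2 * k / 2)) := by
      rw [← Real.exp_add]; congr 1; ring
    have : Real.exp (-(l ^ 2 * k)) / l * (N * (2 * 2 ^ k * Real.exp (l ^ 2 * k / 2)))
      = 2 ^ k / l * (2 * N * Real.exp (-(l ^ 2 * k / 2))) := by
      rw [← e]; ring
    rw [this]
    refine (mul_le_mul_of_nonneg_left hb (by positivity)).trans_eq ?_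
    field_simp
  have h3 : ∑ s : Fin k → Bool, l * (k : ℝ) = 2 ^ k * (l * k) := by simp
  rw [h3]
  linarith

lemma exists_k7 (d : ℕ) (l : ℝ) (hl : 0 < l) : ∃ k : ℕ, 1 ≤ k ∧
    2 * ((d + 1) * (2 * k) ^ d : ℝ) * Real.exp (-(l ^ 2 * k / 2)) ≤ l ^ 2 * k := by
  have hc : 0 < l ^ 2 / 2 := by positivity
  have h1 := Real.tendsto_pow_mul_exp_neg_atTop_nhds_zero d
  have h2 : Filter.Tendsto (fun k : ℕ => l ^ 2 / 2 * (k : ℝ)) Filter.atTop Filter.atTop :=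
    tendsto_natCast_atTop_atTop.const_mul_atTop hc
  have h3 := (h1.comp h2).const_mul (2 * (d + 1) * 2 ^ d / (l ^ 2 / 2) ^ d)
  rw [mul_zero] at h3
  have h4 := h3.eventually_lt_const (u := l ^ 2) (by positivity)
  obtain ⟨k, hk, hk1⟩ := (h4.and (Filter.eventually_ge_atTop 1)).exists
  refine ⟨k, hk1, ?_⟩
  have hk' : (1 : ℝ) ≤ k := by exact_mod_cast hk1
  have e : 2 * ((d + 1) * (2 * k) ^ d : ℝ) * Real.exp (-(l ^ 2 * k / 2)) =
    2 * (d + 1) * 2 ^ d / (l ^ 2 / 2) ^ d * ((fun x => x ^ d * Real.exp (-x)) ∘ fun k : ℕ => l ^ 2 / 2 * (k : ℝ)) k := by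
    simp only [Function.comp]
    rw [show -(l ^ 2 / 2 * (k : ℝ)) = -(l ^ 2 * k / 2) by ring, mul_pow, mul_pow]
    have : (l ^ 2 / 2) ^ d ≠ 0 := by positivity
    generalize (l ^ 2 / 2) ^ d = w at *
    field_simp
  rw [e]
  nlinarith [sq_nonneg l]

open Classical in
noncomputable def trace7 {X ι : Type*} [Fintype ι] (z : ι → X) (A : Set X) : Finset ι :=
  Finset.univ.filter fun i => z i ∈ A

open Classical in
lemma card_trace7 {X ι : Type*} [Fintype ι] [DecidableEq ι] [Nonempty ι] (C : Set (Set X))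
    (d : ℕ) (hVC : ∀ F : Finset X, F.card = d → ¬ Shatters C F)
    (F : Finset (Set X)) (hF : ∀ A ∈ F, A ∈ C) (z : ι → X) :
    (F.image (trace7 z)).card ≤ (d + 1) * (Fintype.card ι) ^ d := by
  have hvc : (F.image (trace7 z)).vcDim ≤ d := by
    unfold Finset.vcDim
    refine Finset.sup_le fun t ht => ?_
    rw [Finset.mem_shatterer] at ht
    by_contra hlt
    push Not at hlt
    obtain ⟨u, hut, hud⟩ := Finset.exists_subset_card_eq hlt.le
    have hu := ht.mono_right hut
    have hinj : Set.InjOn z u := by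
      intro i hi j hj hij
      obtain ⟨v, hv, hv'⟩ := hu (t := {i}) (by simpa using hi)
      obtain ⟨A, hA, rfl⟩ := Finset.mem_image.1 hv
      have h1 : i ∈ u ∩ trace7 z A := by rw [hv']; simp
      have h2 : j ∈ u ∩ trace7 z A := by
        simp only [trace7, Finset.mem_inter, Finset.mem_filter, Finset.mem_univ, true_and] at h1 ⊢
        exact ⟨hj, hij ▸ h1.2⟩
      rw [hv'] at h2
      exact (Finset.mem_singleton.1 h2).symm
    refine hVC (u.image z) (by rw [Finset.card_image_of_injOn hinj, hud]) ?_
    intro S hS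
    obtain ⟨v, hv, hv'⟩ := hu (t := u.filter fun i => z i ∈ S) (Finset.filter_subset _ _)
    obtain ⟨A, hA, rfl⟩ := Finset.mem_image.1 hv
    refine ⟨A, hF A hA, ?_⟩
    have key : ∀ i ∈ u, (z i ∈ A ↔ z i ∈ S) := by
      intro i hi
      have := Finset.ext_iff.1 hv' i
      simpa [trace7, hi] using this
    ext x
    constructor
    · rintro ⟨hx, hxA⟩
      obtain ⟨i, hi, rfl⟩ := Finset.mem_image.1 (Finset.mem_coe.1 hx)
      exact (key i hi).1 hxA
    · intro hx
      have hx' := hS hx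
      obtain ⟨i, hi, rfl⟩ := Finset.mem_image.1 hx'
      exact ⟨hx', (key i hi).2 hx⟩
  refine (Finset.card_le_card_shatterer _).trans (Finset.card_shatterer_le_sum_vcDim.trans ?_)
  calc _ ≤ ∑ j ∈ Finset.Iic d, (Fintype.card ι).choose j :=
        Finset.sum_le_sum_of_subset (Finset.Iic_subset_Iic.2 hvc)
    _ ≤ ∑ j ∈ Finset.Iic d, (Fintype.card ι) ^ d := by
        refine Finset.sum_le_sum fun j hj => (Nat.choose_le_pow _ _).trans ?_
        exact Nat.pow_le_pow_right Fintype.card_pos (Finset.mem_Iic.1 hj)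
    _ = _ := by simp

open Classical in
noncomputable def ind7 {X : Type*} (A : Set X) (x : X) : ℝ := if x ∈ A then 1 else 0

lemma freq_eq7 {X : Type*} (k : ℕ) (A : Set X) (p : Fin k → X) :
    freq k A p = (∑ i, ind7 A (p i)) / k := by
  simp [freq, ind7]

def swap7 {X : Type*} (b : Bool) (p : X × X) : X × X := if b then p.swap else p

noncomputable def G7 {X : Type*} (k : ℕ) (F : Finset (Set X)) (x x' : Fin k → X) : ENNReal :=
  ⨆ A ∈ F, ‖freq k A x - freq k A x'‖ₑ

open Classical in
lemma sym_pointwise7 {X : Type*} (C : Set (Set X))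
    (d : ℕ) (hVC : ∀ F : Finset X, F.card = d → ¬ Shatters C F)
    (F : Finset (Set X)) (hF : ∀ A ∈ F, A ∈ C) (k : ℕ) (hk : 1 ≤ k) (l : ℝ) (hl : 0 < l)
    (hb : 2 * ((d + 1) * (2 * k) ^ d : ℝ) * Real.exp (-(l ^ 2 * k / 2)) ≤ l ^ 2 * k)
    (y : Fin k → X × X) :
    ∑ s : Fin k → Bool, G7 k F (fun i => (swap7 (s i) (y i)).1) (fun i => (swap7 (s i) (y i)).2)
      ≤ ENNReal.ofReal (2 ^ k * (2 * l)) := by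
  set T : Finset (Fin k → ℝ) := F.image (fun A i => ind7 A (y i).1 - ind7 A (y i).2) with hTdef
  have hT : ∀ a ∈ T, ∀ i, |a i| ≤ 1 := by
    intro a ha i
    obtain ⟨A, hA, rfl⟩ := Finset.mem_image.1 ha
    simp only [ind7]
    split_ifs <;> norm_num
  have hcard : (T.card : ℝ) ≤ (d + 1) * (2 * k) ^ d := by
    let z : Fin k × Bool → X := fun q => if q.2 then (y q.1).2 else (y q.1).1
    let g : Finset (Fin k × Bool) → Fin k → ℝ := fun t i =>
      (if (i, false) ∈ t then 1 else 0) - (if (i, true) ∈ t then 1 else 0)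
    have : Nonempty (Fin k × Bool) := ⟨(⟨0, hk⟩, true)⟩
    have h1 := card_trace7 C d hVC F hF z
    have h2 : T = (F.image (trace7 z)).image g := by
      rw [hTdef, Finset.image_image]
      congr 1
      funext A i
      simp [g, trace7, z, ind7]
    have h3 : T.card ≤ (d + 1) * (2 * k) ^ d := by
      rw [h2]
      refine Finset.card_image_le.trans (h1.trans_eq ?_)
      simp [mul_comm]
    exact_mod_cast h3
  have hs := maj7_sum k hk T hT l hl _ hcard hb
  calc _ ≤ ∑ s : Fin k → Bool, ENNReal.ofReal (maj7 k T l s) := by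
        refine Finset.sum_le_sum fun s _ => ?_
        refine iSup₂_le fun A hA => ?_
        rw [Real.enorm_eq_ofReal_abs]
        refine ENNReal.ofReal_le_ofReal ?_
        refine le_trans (le_of_eq ?_) (maj7_le k hk T l hl s _ (Finset.mem_image_of_mem _ hA))
        rw [freq_eq7, freq_eq7, ← sub_div, abs_div, Nat.abs_cast, ← Finset.sum_sub_distrib]
        congr 2
        refine Finset.sum_congr rfl fun i _ => ?_
        cases s i <;> simp [swap7, sgn7]
    _ = ENNReal.ofReal (∑ s, maj7 k T l s) :=
        (ENNReal.ofReal_sum_of_nonneg fun s _ => maj7_nonneg k T l hl s).symm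
    _ ≤ _ := ENNReal.ofReal_le_ofReal hs

lemma meas_ind7 {X : Type*} [MeasurableSpace X] {A : Set X} (hA : MeasurableSet A) :
    Measurable (ind7 A) := by
  unfold ind7
  exact Measurable.ite hA measurable_const measurable_const

lemma meas_freq7 {X : Type*} [MeasurableSpace X] (k : ℕ) {A : Set X} (hA : MeasurableSet A) :
    Measurable (freq k A) := by
  have : freq k A = fun p => (∑ i, ind7 A (p i)) / k := funext (freq_eq7 k A)
  rw [this]
  have := meas_ind7 hA
  fun_prop

lemma meas_G7 {X : Type*} [MeasurableSpace X] (k : ℕ) (F : Finset (Set X))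
    (hF : ∀ A ∈ F, MeasurableSet A) :
    Measurable (fun q : (Fin k → X) × (Fin k → X) => G7 k F q.1 q.2) := by
  unfold G7
  refine Measurable.biSup _ F.countable_toSet fun A hA => ?_
  have := meas_freq7 k (hF A hA)
  fun_prop

lemma avg7 {Y : Type*} [MeasurableSpace Y] (ρ : Measure Y) [IsProbabilityMeasure ρ] (k : ℕ)
    (H : Y → ENNReal) (c : ℝ) (f : (Fin k → Bool) → Y → Y) (hH : Measurable H)
    (hf : ∀ s, MeasurePreserving (f s) ρ ρ)
    (hs : ∀ y, ∑ s : Fin k → Bool, H (f s y) ≤ ENNReal.ofReal (2 ^ k * c)) :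
    ∫⁻ y, H y ∂ρ ≤ ENNReal.ofReal c := by
  have h2 : (2 ^ k : ENNReal) * ∫⁻ y, H y ∂ρ ≤ 2 ^ k * ENNReal.ofReal c := by
    calc (2 ^ k : ENNReal) * ∫⁻ y, H y ∂ρ
        = ∑ s : Fin k → Bool, ∫⁻ y, H (f s y) ∂ρ := by
          simp_rw [fun s => (hf s).lintegral_comp hH]; simp
      _ = ∫⁻ y, ∑ s : Fin k → Bool, H (f s y) ∂ρ :=
          (lintegral_finsetSum _ fun s _ => hH.comp (hf s).measurable).symm
      _ ≤ ∫⁻ y, ENNReal.ofReal (2 ^ k * c) ∂ρ := lintegral_mono hs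
      _ = 2 ^ k * ENNReal.ofReal c := by
          rw [lintegral_const, measure_univ, mul_one, ENNReal.ofReal_mul (by positivity),
            ENNReal.ofReal_pow (by positivity)]
          simp
  have h3 : (2 ^ k : ENNReal) ≠ 0 := pow_ne_zero _ (by simp)
  have h4 : (2 ^ k : ENNReal) ≠ ⊤ := ENNReal.pow_ne_top (by simp)
  exact (ENNReal.mul_le_mul_iff_right h3 h4).1 h2

lemma lint_G7 {X : Type*} [MeasurableSpace X] (μ : Measure X) [IsProbabilityMeasure μ]
    (C : Set (Set X))
    (d : ℕ) (hVC : ∀ F : Finset X, F.card = d → ¬ Shatters C F)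
    (F : Finset (Set X)) (hF : ∀ A ∈ F, A ∈ C) (hFm : ∀ A ∈ F, MeasurableSet A)
    (k : ℕ) (hk : 1 ≤ k) (l : ℝ) (hl : 0 < l)
    (hb : 2 * ((d + 1) * (2 * k) ^ d : ℝ) * Real.exp (-(l ^ 2 * k / 2)) ≤ l ^ 2 * k) :
    ∫⁻ x, ∫⁻ x', G7 k F x x' ∂(Measure.pi fun _ : Fin k => μ) ∂(Measure.pi fun _ : Fin k => μ)
      ≤ ENNReal.ofReal (2 * l) := by
  have hm := meas_G7 k F hFm
  rw [← lintegral_prod (fun q : (Fin k → X) × (Fin k → X) => G7 k F q.1 q.2) hm.aemeasurable]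
  have hmp := measurePreserving_arrowProdEquivProdArrow X X (Fin k) (fun _ => μ) (fun _ => μ)
  rw [← hmp.lintegral_comp hm]
  refine avg7 (Measure.pi fun _ : Fin k => μ.prod μ) k _ (2 * l)
    (fun s y i => swap7 (s i) (y i)) (hm.comp hmp.measurable) (fun s => ?_)
    (fun y => sym_pointwise7 C d hVC F hF k hk l hl hb y)
  have h1 : ∀ i, MeasurePreserving (swap7 (X := X) (s i)) (μ.prod μ) (μ.prod μ) := by
    intro i
    cases s i
    · exact MeasurePreserving.id _
    · exact Measure.measurePreserving_swap
  exact measurePreserving_pi (fun _ => μ.prod μ) (fun _ => μ.prod μ) h1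

lemma integrable_ind7 {X : Type*} [MeasurableSpace X] (μ : Measure X) [IsProbabilityMeasure μ]
    {A : Set X} (hA : MeasurableSet A) : Integrable (ind7 A) μ := by
  refine Integrable.of_bound (meas_ind7 hA).aestronglyMeasurable 1 (ae_of_all _ fun x => ?_)
  simp only [ind7]; split_ifs <;> simp

lemma integral_ind7 {X : Type*} [MeasurableSpace X] (μ : Measure X) [IsProbabilityMeasure μ]
    {A : Set X} (hA : MeasurableSet A) : ∫ x, ind7 A x ∂μ = (μ A).toReal := by
  have : ind7 A = A.indicator (fun _ => (1 : ℝ)) := by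
    funext x; simp [ind7, Set.indicator]
  rw [this, integral_indicator hA]; simp [Measure.real]

lemma integral_freq7 {X : Type*} [MeasurableSpace X] (μ : Measure X) [IsProbabilityMeasure μ]
    {A : Set X} (hA : MeasurableSet A) (k : ℕ) (hk : 1 ≤ k) :
    Integrable (freq k A) (Measure.pi fun _ : Fin k => μ) ∧
    ∫ p, freq k A p ∂(Measure.pi fun _ : Fin k => μ) = (μ A).toReal := by
  have e : freq k A = fun p => (∑ i, ind7 A (p i)) / k := funext (freq_eq7 k A)
  have hmp := fun i : Fin k => measurePreserving_eval (fun _ : Fin k => μ) i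
  have hi : ∀ i : Fin k, Integrable (fun p : Fin k → X => ind7 A (p i)) (Measure.pi fun _ => μ) :=
    fun i => (hmp i).integrable_comp_of_integrable (integrable_ind7 μ hA)
  have hv : ∀ i : Fin k, ∫ p : Fin k → X, ind7 A (p i) ∂(Measure.pi fun _ => μ) = (μ A).toReal := by
    intro i
    rw [← integral_ind7 μ hA]
    have := integral_map (μ := Measure.pi fun _ : Fin k => μ) (hmp i).measurable.aemeasurable
      (f := ind7 A) (meas_ind7 hA).aestronglyMeasurable
    rw [(hmp i).map_eq] at this
    exact this.symm
  rw [e]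
  refine ⟨(integrable_finsetSum _ fun i _ => hi i).div_const _, ?_⟩
  rw [integral_div, integral_finsetSum _ fun i _ => hi i]
  simp_rw [hv]
  have : (k : ℝ) ≠ 0 := by positivity
  simp; field_simp

lemma finite_vc7 {X : Type*} [MeasurableSpace X] (μ : Measure X) [IsProbabilityMeasure μ]
    (C : Set (Set X))
    (d : ℕ) (hVC : ∀ F : Finset X, F.card = d → ¬ Shatters C F)
    (F : Finset (Set X)) (hF : ∀ A ∈ F, A ∈ C) (hFm : ∀ A ∈ F, MeasurableSet A)
    (k : ℕ) (hk : 1 ≤ k) (l : ℝ) (hl : 0 < l)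
    (hb : 2 * ((d + 1) * (2 * k) ^ d : ℝ) * Real.exp (-(l ^ 2 * k / 2)) ≤ l ^ 2 * k) :
    1 / 2 ≤ (Measure.pi fun _ : Fin k => μ)
      {p | ∀ A ∈ F, |freq k A p - (μ A).toReal| ≤ 4 * l} := by
  set P := Measure.pi fun _ : Fin k => μ with hP
  set f : (Fin k → X) → ENNReal := fun p => ⨆ A ∈ F, ‖freq k A p - (μ A).toReal‖ₑ with hf
  have hfm : Measurable f := by
    refine Measurable.biSup _ F.countable_toSet fun A hA => ?_
    have := meas_freq7 k (hFm A hA)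
    fun_prop
  have h1 : ∫⁻ p, f p ∂P ≤ ENNReal.ofReal (2 * l) := by
    refine le_trans (lintegral_mono fun x => ?_) (lint_G7 μ C d hVC F hF hFm k hk l hl hb)
    refine iSup₂_le fun A hA => ?_
    obtain ⟨hi, hv⟩ := integral_freq7 μ (hFm A hA) k hk
    have e : freq k A x - (μ A).toReal = ∫ x', (freq k A x - freq k A x') ∂P := by
      rw [integral_sub (integrable_const _) hi, hv]; simp
    rw [e]
    refine (enorm_integral_le_lintegral_enorm _).trans (lintegral_mono fun x' => ?_)
    exact le_iSup₂ (f := fun A (_ : A ∈ F) => ‖freq k A x - freq k A x'‖ₑ) A hA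
  have h2 := (mul_meas_ge_le_lintegral (μ := P) hfm (ENNReal.ofReal (4 * l))).trans h1
  have h3 : P {p | ENNReal.ofReal (4 * l) ≤ f p} ≤ 1 / 2 := by
    have e : ENNReal.ofReal (2 * l) = ENNReal.ofReal (4 * l) * (1 / 2) := by
      rw [show (1 / 2 : ENNReal) = ENNReal.ofReal (1 / 2) by
        rw [ENNReal.ofReal_div_of_pos (by norm_num)]; simp, ← ENNReal.ofReal_mul (by positivity)]
      congr 1; ring
    rw [e] at h2
    exact (ENNReal.mul_le_mul_iff_right (by simpa using hl) (by finiteness)).1 h2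
  set S := {p : Fin k → X | ∀ A ∈ F, |freq k A p - (μ A).toReal| ≤ 4 * l} with hS
  have h4 : Sᶜ ⊆ {p | ENNReal.ofReal (4 * l) ≤ f p} := by
    intro p hp
    simp only [hS, Set.mem_compl_iff, Set.mem_ofPred_eq, not_forall, not_le] at hp
    obtain ⟨A, hA, hlt⟩ := hp
    refine le_trans ?_ (le_iSup₂ (f := fun A (_ : A ∈ F) => ‖freq k A p - (μ A).toReal‖ₑ) A hA)
    rw [Real.enorm_eq_ofReal_abs]
    exact ENNReal.ofReal_le_ofReal hlt.le
  have h5 : (1 : ENNReal) ≤ P S + 1 / 2 := by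
    calc (1 : ENNReal) = P Set.univ := by simp [hP]
      _ ≤ P S + P Sᶜ := by rw [← Set.union_compl_self S]; exact measure_union_le _ _
      _ ≤ _ := by gcongr; exact (measure_mono h4).trans h3
  by_contra hlt
  push Not at hlt
  have : P S + 1 / 2 < 1 := by
    calc P S + 1 / 2 < 1 / 2 + 1 / 2 := ENNReal.add_lt_add_right (by simp) hlt
      _ = 1 := ENNReal.add_halves 1
  exact absurd h5 (not_le.2 this)

lemma open_box7 {X : Type*} [TopologicalSpace X] [MeasurableSpace X]
    (μ : Measure X) [IsProbabilityMeasure μ] [μ.OuterRegular] (k : ℕ)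
    (t : Set (Fin k → X)) (δ : ENNReal) (hδ : δ ≠ 0) :
    ∃ V : Set (Fin k → X), IsOpen V ∧ t ⊆ V ∧
      (Measure.pi fun _ : Fin k => μ) V ≤ ∏ i, μ (Function.eval i '' t) + δ := by
  have h1 : ∀ (m : ℕ) (i : Fin k), ∃ U ⊇ Function.eval i '' t, IsOpen U ∧
      μ U ≤ μ (Function.eval i '' t) + ((m : ENNReal) + 1)⁻¹ := fun m i =>
    Set.exists_isOpen_le_add _ μ (by simp)
  choose U hU hUo hUm using h1
  have h2 : Filter.Tendsto (fun m : ℕ => ∏ i : Fin k, (μ (Function.eval i '' t) + ((m : ENNReal) + 1)⁻¹))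
      Filter.atTop (nhds (∏ i : Fin k, (μ (Function.eval i '' t) + 0))) := by
    refine ENNReal.tendsto_finsetProd_of_ne_top _ (fun i _ => ?_) (fun i _ => by finiteness)
    refine tendsto_const_nhds.add ?_
    have := (Filter.tendsto_add_atTop_iff_nat 1).2 ENNReal.tendsto_inv_nat_nhds_zero
    simpa using this
  simp only [add_zero] at h2
  have hlt : ∏ i : Fin k, μ (Function.eval i '' t) < ∏ i : Fin k, μ (Function.eval i '' t) + δ :=
    ENNReal.lt_add_right (ENNReal.prod_ne_top fun i _ => by finiteness) hδ
  obtain ⟨m, hm⟩ := (h2.eventually_lt_const hlt).exists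
  refine ⟨Set.pi Set.univ (U m), isOpen_set_pi Set.finite_univ fun i _ => hUo m i, ?_, ?_⟩
  · intro p hp i _
    exact hU m i ⟨p, hp, rfl⟩
  · rw [Measure.pi_pi]
    exact (Finset.prod_le_prod' fun i _ => hUm m i).trans hm.le

/-- outer regularity of the product measure, at null sets -/
lemma open_null7 {X : Type*} [TopologicalSpace X] [MeasurableSpace X]
    (μ : Measure X) [IsProbabilityMeasure μ] [μ.OuterRegular] (k : ℕ) (hk : 1 ≤ k)
    (B : Set (Fin k → X)) (hB : (Measure.pi fun _ : Fin k => μ) B = 0) :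
    ∃ V : Set (Fin k → X), IsOpen V ∧ B ⊆ V ∧ (Measure.pi fun _ : Fin k => μ) V < 1 / 2 := by
  have h0 : OuterMeasure.pi (fun _ : Fin k => μ.toOuterMeasure) B = 0 := by
    rw [Measure.pi] at hB
    exact le_antisymm ((le_toMeasure_apply _ _ B).trans hB.le) (zero_le)
  have : Nonempty (Fin k) := ⟨⟨0, hk⟩⟩
  have hemp : piPremeasure (fun _ : Fin k => μ.toOuterMeasure) ∅ = 0 := by
    simp [piPremeasure, Nat.ne_of_gt hk]
  rw [OuterMeasure.pi, OuterMeasure.boundedBy_eq_ofFunction hemp, OuterMeasure.ofFunction_apply] at h0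
  have h4 : (⨅ (t : ℕ → Set (Fin k → X)) (_ : B ⊆ Set.iUnion t),
      ∑' n, piPremeasure (fun _ : Fin k => μ.toOuterMeasure) (t n)) < 1 / 4 := by
    rw [h0]; simp
  simp only [iInf_lt_iff] at h4
  obtain ⟨t, ht, hsum⟩ := h4
  obtain ⟨δ, hδ, hδs⟩ := ENNReal.exists_pos_sum_of_countable' (ε := 1 / 4) (by simp) ℕ
  choose V hVo hVt hVm using fun n => open_box7 μ k (t n) (δ n) (hδ n).ne'
  refine ⟨⋃ n, V n, isOpen_iUnion hVo, ht.trans (Set.iUnion_mono hVt), ?_⟩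
  calc _ ≤ ∑' n, (Measure.pi fun _ : Fin k => μ) (V n) := measure_iUnion_le _
    _ ≤ ∑' n, (piPremeasure (fun _ : Fin k => μ.toOuterMeasure) (t n) + δ n) :=
        ENNReal.tsum_le_tsum hVm
    _ = _ := ENNReal.tsum_add
    _ < 1 / 4 + 1 / 4 := ENNReal.add_lt_add hsum hδs
    _ = 1 / 2 := by
      rw [ENNReal.div_add_div_same, ← ENNReal.toReal_eq_toReal_iff' (by finiteness) (by finiteness)]
      norm_num [ENNReal.toReal_add]

lemma closed_approx7 {X : Type*} [TopologicalSpace X] {A : Set X} (hA : IsClopen A) (k : ℕ)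
    (c ε : ℝ) : IsClosed {p : Fin k → X | |freq k A p - c| ≤ ε} := by
  have h1 : Continuous (ind7 A) := by
    classical
    unfold ind7
    refine Continuous.if ?_ continuous_const continuous_const
    intro a ha
    have h : frontier A = ∅ := hA.frontier_eq
    change a ∈ frontier A at ha
    rw [h] at ha
    exact absurd ha (Set.notMem_empty a)
  have e : freq k A = fun p => (∑ i, ind7 A (p i)) / k := funext (freq_eq7 k A)
  have h2 : Continuous (freq k A) := by
    rw [e]
    fun_prop
  exact isClosed_le (by fun_prop) continuous_const

theorem stmt7 {X : Type*} [TopologicalSpace X] [CompactSpace X] [T2Space X]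
    [MeasurableSpace X] [BorelSpace X]
    (μ : Measure X) [IsProbabilityMeasure μ] [μ.Regular]
    (C : Set (Set X)) (hCclopen : ∀ A ∈ C, IsClopen A)
    (d : ℕ) (hVC : ∀ F : Finset X, F.card = d → ¬ Shatters C F) :
    ∀ ε : ℝ, 0 < ε → ∃ k : ℕ, 1 ≤ k ∧ ∃ B : Set (Fin k → X),
      IsClosed B ∧ 0 < (Measure.pi fun _ : Fin k => μ) B ∧
      ∀ p ∈ B, ∀ A ∈ C, |freq k A p - (μ A).toReal| ≤ ε := by
  classical
  intro ε hε
  obtain ⟨k, hk, hb⟩ := exists_k7 d (ε / 4) (by positivity)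
  refine ⟨k, hk, ⋂ A : C, {p | |freq k A.1 p - (μ A.1).toReal| ≤ ε}, ?_, ?_, ?_⟩
  · exact isClosed_iInter fun A => closed_approx7 (hCclopen A.1 A.2) k _ _
  · rw [pos_iff_ne_zero]
    intro h0
    obtain ⟨V, hVo, hBV, hVm⟩ := open_null7 μ k hk _ h0
    have hcomp : IsCompact Vᶜ := hVo.isClosed_compl.isCompact
    obtain ⟨u, hu⟩ := hcomp.elim_finite_subfamily_closed
      (fun A : C => {p | |freq k A.1 p - (μ A.1).toReal| ≤ ε})
      (fun A => closed_approx7 (hCclopen A.1 A.2) k _ _)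
      (by
        rw [← Set.disjoint_iff_inter_eq_empty]
        exact Set.disjoint_compl_left_iff_subset.2 hBV)
    have h1 := finite_vc7 μ C d hVC (u.image Subtype.val)
      (fun A hA => by
        obtain ⟨a, _, rfl⟩ := Finset.mem_image.1 hA
        exact a.2)
      (fun A hA => by
        obtain ⟨a, _, rfl⟩ := Finset.mem_image.1 hA
        exact (hCclopen a.1 a.2).isOpen.measurableSet)
      k hk (ε / 4) (by positivity) hb
    refine absurd (h1.trans (measure_mono ?_)) (not_le.2 hVm)
    intro p hp
    by_contra hpV
    have : p ∈ Vᶜ ∩ ⋂ A ∈ u, {p : Fin k → X | |freq k A.1 p - (μ A.1).toReal| ≤ ε} := by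
      refine ⟨hpV, Set.mem_iInter₂.2 fun A hA => ?_⟩
      have := hp A.1 (Finset.mem_image_of_mem _ hA)
      rwa [mul_div_cancel₀ ε (by norm_num : (4 : ℝ) ≠ 0)] at this
    rw [hu] at this
    exact this
  · intro p hp A hA
    exact Set.mem_iInter.1 hp ⟨A, hA⟩
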